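/- The sum over n ≥ 0 of (M̄_e(n) - M̄_o(n)) q^n equals (-3q;q)_∞ / (-q;q)_∞, where M̄_e(n) and M̄_o(n) count overpartitions of n with an even, respectively odd, number of missing integers. -/

import Mathlib

/-!
Group overpartitions by their largest part `N`. A partition with `d` distinct part sizes carries
`2 ^ d` overlinings and has `N - d` missing integers (`partMissing_add_card`), so its signed
contribution is `(-1) ^ N (-2) ^ d` (`signedCount_succ`). The generating function of partitions
with parts at most `N`, weighted by `(-2) ^ d`, is
`A_N = ∏_{i ≤ N} (1 - 2 q ^ i / (1 - q ^ i)) = ∏_{i ≤ N} (1 - 3 q ^ i) / (1 - q ^ i)`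
(`evaluates_bounded`), and the contribution of largest part `N ≥ 1` is
`(-1) ^ N (A_N - A_{N-1}) = (-q) ^ N (3; q)_N / (q; q)_N`. So the overpartitions with largest part
at most `N` give a partial sum of the `q`-binomial series with `a = 3`, `z = -q`
(`hasSum_signedCount`), whose value is `(-3q; q)_∞ / (-q; q)_∞` (`qSeries_eq`); the latter follows
by iterating the functional equation `(1 - z) F(z) = (1 - a z) F(q z)`.

Letting `N → ∞` inside the sum over `n` is justified by dominated convergence, the dominating
series being the generating function of all overpartitions (`summable_overpartitions`).
-/

/-- An overpartition of `n`: a partition of `n` together with a choice, for each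
distinct part size, of whether its first occurrence is overlined. -/
structure Overpartition (n : ℕ) where
  partition : n.Partition
  overlined : Finset ℕ
  overlined_subset : overlined ⊆ partition.parts.toFinset

instance subsetFintype (t : Finset ℕ) : Fintype {s : Finset ℕ // s ⊆ t} :=
  Fintype.subtype t.powerset (fun _ => Finset.mem_powerset)

instance (n : ℕ) : Fintype (Overpartition n) :=
  Fintype.ofEquiv (Σ π : n.Partition, {s : Finset ℕ // s ⊆ π.parts.toFinset})
    { toFun := fun x => ⟨x.1, x.2.1, x.2.2⟩
      invFun := fun o => ⟨o.partition, o.overlined, o.overlined_subset⟩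
      left_inv := fun _ => rfl
      right_inv := fun _ => rfl }

/-- The number of missing integers of an overpartition: positive integers less than
the largest part which occur neither overlined nor non-overlined. -/
def missingCount {n : ℕ} (o : Overpartition n) : ℕ :=
  ((Finset.Ico 1 o.partition.parts.sup).filter (fun j => j ∉ o.partition.parts)).card

/-- `OPcount n m` is the number of overpartitions of `n` with exactly `m` missing integers. -/
def OPcount (n m : ℕ) : ℕ := Fintype.card {o : Overpartition n // missingCount o = m}

/-- The number of overpartitions of `n` with an even number of missing integers. -/
def OMe (n : ℕ) : ℕ := Fintype.card {o : Overpartition n // Even (missingCount o)}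

/-- The number of overpartitions of `n` with an odd number of missing integers. -/
def OMo (n : ℕ) : ℕ := Fintype.card {o : Overpartition n // Odd (missingCount o)}

/-! ### Absolutely convergent power series and bounded partitions -/

open PowerSeries Filter Topology

/-- `Evaluates P q v`: the power series `P` converges absolutely at `q`, with value `v`. -/
def Evaluates {K : Type*} [NormedField K] (P : PowerSeries K) (q v : K) : Prop :=
  Summable (fun n => ‖coeff n P * q ^ n‖) ∧ HasSum (fun n => coeff n P * q ^ n) v

section Analytic

variable {K : Type*} [NormedField K]

lemma Evaluates.one (q : K) : Evaluates (1 : PowerSeries K) q 1 := by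
  have h : ∀ n, n ≠ 0 → coeff n (1 : PowerSeries K) * q ^ n = 0 := by
    intro n hn; simp [coeff_one, hn]
  constructor
  · apply summable_of_ne_finset_zero (s := {0})
    intro n hn
    rw [h n (by simpa using hn), norm_zero]
  · simpa using hasSum_single 0 h

lemma Evaluates.add {P Q : PowerSeries K} {q u v : K} (hP : Evaluates P q u)
    (hQ : Evaluates Q q v) : Evaluates (P + Q) q (u + v) := by
  have h : (fun n => coeff n (P + Q) * q ^ n) =
      fun n => coeff n P * q ^ n + coeff n Q * q ^ n := by
    funext n; rw [map_add, add_mul]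
  constructor
  · refine Summable.of_nonneg_of_le (fun _ => norm_nonneg _) (fun n => ?_) (hP.1.add hQ.1)
    rw [congrFun h n]
    exact norm_add_le _ _
  · rw [h]
    exact hP.2.add hQ.2

lemma Evaluates.mul [CompleteSpace K] {P Q : PowerSeries K} {q u v : K} (hP : Evaluates P q u)
    (hQ : Evaluates Q q v) : Evaluates (P * Q) q (u * v) := by
  have h : (fun n => coeff n (P * Q) * q ^ n) = fun n =>
      ∑ kl ∈ Finset.HasAntidiagonal.antidiagonal n, (coeff kl.1 P * q ^ kl.1) * (coeff kl.2 Q * q ^ kl.2) := by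
    funext n
    rw [coeff_mul, Finset.sum_mul]
    refine Finset.sum_congr rfl fun kl hkl => ?_
    rw [← Finset.HasAntidiagonal.mem_antidiagonal.mp hkl, pow_add]
    ring
  have hs : Summable (fun n => ‖coeff n (P * Q) * q ^ n‖) := by
    have := summable_norm_sum_mul_antidiagonal_of_summable_norm hP.1 hQ.1
    simpa only [← congrFun h _] using this
  refine ⟨hs, ?_⟩
  have := tsum_mul_tsum_eq_tsum_sum_antidiagonal_of_summable_norm hP.1 hQ.1
  rw [hP.2.tsum_eq, hQ.2.tsum_eq] at this
  rw [this, ← h]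
  exact hs.of_norm.hasSum

lemma Evaluates.prod [CompleteSpace K] {ι : Type*} (s : Finset ι) {P : ι → PowerSeries K} {q : K}
    {v : ι → K} (h : ∀ i ∈ s, Evaluates (P i) q (v i)) :
    Evaluates (∏ i ∈ s, P i) q (∏ i ∈ s, v i) := by
  classical
  induction s using Finset.induction_on with
  | empty => simpa using Evaluates.one q
  | insert a s ha ih =>
    rw [Finset.prod_insert ha, Finset.prod_insert ha]
    exact (h a (by simp)).mul (ih fun i hi => h i (by simp [hi]))

open scoped PowerSeries.WithPiTopology in
/-- The coefficients of `w (X ^ (i + 1) + X ^ (2 (i + 1)) + ⋯)`. -/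
lemma coeff_geom (w : K) (i n : ℕ) :
    coeff n (∑' j : ℕ, w • (X : PowerSeries K) ^ ((i + 1) * (j + 1))) =
      if (i + 1) ∣ n ∧ n ≠ 0 then w else 0 := by
  rw [(Nat.Partition.summable_genFun_term (fun _ _ => w) i).map_tsum _
    (WithPiTopology.continuous_coeff _ _)]
  simp only [map_smul, coeff_X_pow, smul_eq_mul, mul_ite, mul_one, mul_zero]
  split_ifs with h
  · obtain ⟨⟨c, rfl⟩, hc⟩ := h
    obtain ⟨c, rfl⟩ := Nat.exists_eq_add_one_of_ne_zero (right_ne_zero_of_mul hc)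
    rw [tsum_eq_single c]
    · simp
    · intro b hb
      simp [Ne.symm hb]
  · rw [show (fun j => if n = (i + 1) * (j + 1) then w else 0) = fun _ => (0 : K) from ?_,
      tsum_zero]
    funext j
    rw [if_neg]
    rintro rfl
    exact h ⟨dvd_mul_right _ _, by positivity⟩

open scoped PowerSeries.WithPiTopology in
lemma evaluates_geom (w : K) {q : K} (hq : ‖q‖ < 1) (i : ℕ) :
    Evaluates (∑' j : ℕ, w • (X : PowerSeries K) ^ ((i + 1) * (j + 1))) q
      (w * q ^ (i + 1) / (1 - q ^ (i + 1))) := by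
  have hinj : Function.Injective (fun j : ℕ => (i + 1) * (j + 1)) := by
    intro a b h
    simpa using h
  have hqi : ‖q ^ (i + 1)‖ < 1 := by
    rw [norm_pow]; exact pow_lt_one₀ (norm_nonneg _) hq (by simp)
  have hz : ∀ n, n ∉ Set.range (fun j : ℕ => (i + 1) * (j + 1)) →
      coeff n (∑' j : ℕ, w • (X : PowerSeries K) ^ ((i + 1) * (j + 1))) * q ^ n = 0 := by
    intro n hn
    rw [coeff_geom, if_neg, zero_mul]
    rintro ⟨⟨c, rfl⟩, hc⟩
    obtain ⟨c, rfl⟩ := Nat.exists_eq_add_one_of_ne_zero (right_ne_zero_of_mul hc)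
    exact hn ⟨c, rfl⟩
  have hv : ∀ j : ℕ, coeff ((i + 1) * (j + 1))
      (∑' j : ℕ, w • (X : PowerSeries K) ^ ((i + 1) * (j + 1))) * q ^ ((i + 1) * (j + 1)) =
      w * q ^ (i + 1) * (q ^ (i + 1)) ^ j := by
    intro j
    rw [coeff_geom, if_pos ⟨dvd_mul_right _ _, by positivity⟩, pow_mul]
    ring
  constructor
  · rw [← hinj.summable_iff (fun n hn => by rw [hz n hn, norm_zero])]
    simp only [Function.comp_def, hv]
    simp only [norm_mul _ _, norm_pow _ _]
    apply Summable.mul_left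
    refine summable_geometric_of_lt_one (by positivity) ?_
    simpa using hqi
  · rw [← hinj.hasSum_iff hz]
    simp only [Function.comp_def, hv]
    rw [div_eq_mul_inv]
    exact (hasSum_geometric_of_norm_lt_one hqi).mul_left _

/-- The weighted count of partitions of `n` with all parts at most `N`, a partition with `d`
distinct part sizes having weight `w ^ d`. -/
noncomputable def boundedCount (w : K) (N n : ℕ) : K :=
  ∑ p : n.Partition, if p.parts.sup ≤ N then w ^ p.parts.toFinset.card else 0

lemma coeff_genFun_bounded (w : K) (N n : ℕ) :
    coeff n (Nat.Partition.genFun fun i _ => if i ≤ N then w else 0) = boundedCount w N n := by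
  rw [Nat.Partition.coeff_genFun, boundedCount]
  refine Finset.sum_congr rfl fun p _ => ?_
  rw [Finsupp.prod, Multiset.toFinsupp_support]
  split_ifs with h
  · rw [Finset.prod_congr rfl (g := fun _ => w), Finset.prod_const]
    intro i hi
    exact if_pos ((Multiset.le_sup (Multiset.mem_toFinset.mp hi)).trans h)
  · rw [Multiset.sup_le] at h
    push Not at h
    obtain ⟨b, hb, hN⟩ := h
    exact Finset.prod_eq_zero (Multiset.mem_toFinset.mpr hb) (if_neg (by omega))

/-- The generating function of `boundedCount w N`: each part size contributes a geometric series. -/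
lemma evaluates_bounded [CompleteSpace K] (w : K) (N : ℕ) {q : K} (hq : ‖q‖ < 1) :
    Summable (fun n => ‖boundedCount w N n * q ^ n‖) ∧
      HasSum (fun n => boundedCount w N n * q ^ n)
        (∏ i ∈ Finset.range N, (1 + w * q ^ (i + 1) / (1 - q ^ (i + 1)))) := by
  open scoped PowerSeries.WithPiTopology in
  have h : Nat.Partition.genFun (fun i _ => if i ≤ N then w else 0) = ∏ i ∈ Finset.range N,
      ((1 : PowerSeries K) + ∑' j : ℕ, w • X ^ ((i + 1) * (j + 1))) := by
    rw [Nat.Partition.genFun_eq_tprod, tprod_eq_prod (s := Finset.range N)]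
    · refine Finset.prod_congr rfl fun i hi => ?_
      have : i + 1 ≤ N := by simpa [Nat.succ_le_iff] using hi
      simp only [this, if_true]
    · intro i hi
      have : ¬ i + 1 ≤ N := by simpa [Nat.succ_le_iff] using hi
      simp only [this, if_false, zero_smul, tsum_zero, add_zero]
  have := Evaluates.prod (Finset.range N)
    fun i _ => (Evaluates.one q).add (evaluates_geom w hq i)
  rw [← h] at this
  simpa only [Evaluates, coeff_genFun_bounded] using this

end Analytic

/-! ### Signed counts of overpartitions -/

/-- The number of missing integers of a partition, which is that of its overpartitions. -/
def partMissing {n : ℕ} (p : n.Partition) : ℕ :=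
  ((Finset.Ico 1 p.parts.sup).filter (fun j => j ∉ p.parts)).card

lemma Multiset.sup_mem_of_ne_zero (s : Multiset ℕ) (hs : s ≠ 0) : s.sup ∈ s := by
  have h := Finset.exists_mem_eq_sup s.toFinset
    (by rwa [Multiset.toFinset_nonempty]) (id : ℕ → ℕ)
  obtain ⟨a, ha, h⟩ := h
  rw [Finset.sup_def, Multiset.map_id, Multiset.toFinset_val, Multiset.sup_dedup] at h
  rw [h]
  simpa using ha

/-- Each integer in `[1, largest part]` is either missing or a part size. -/
lemma partMissing_add_card {n : ℕ} (p : n.Partition) :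
    partMissing p + p.parts.toFinset.card = p.parts.sup := by
  by_cases h0 : p.parts = 0
  · simp [partMissing, h0]
  have hm := Multiset.sup_mem_of_ne_zero _ h0
  have hu : (Finset.Ico 1 p.parts.sup).filter (fun j => j ∉ p.parts) ∪ p.parts.toFinset
      = Finset.Icc 1 p.parts.sup := by
    ext j
    simp only [Finset.mem_union, Finset.mem_filter, Finset.mem_Ico, Multiset.mem_toFinset,
      Finset.mem_Icc]
    constructor
    · rintro (h | h)
      · omega
      · exact ⟨p.parts_pos h, Multiset.le_sup h⟩
    · intro h
      by_cases hj : j ∈ p.parts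
      · exact Or.inr hj
      · refine Or.inl ⟨⟨h.1, lt_of_le_of_ne h.2 ?_⟩, hj⟩
        rintro rfl
        exact hj hm
  rw [partMissing, ← Finset.card_union_of_disjoint, hu, Nat.card_Icc, Nat.add_sub_cancel]
  rw [Finset.disjoint_left]
  intro j hj
  simpa using (Finset.mem_filter.mp hj).2

lemma sup_parts_le {n : ℕ} (p : n.Partition) : p.parts.sup ≤ n := by
  rw [Multiset.sup_le]
  intro b hb
  have := Multiset.le_sum_of_mem hb
  rwa [p.parts_sum] at this

/-- An overpartition is a partition together with a subset of its set of part sizes. -/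
def overpartitionEquiv (n : ℕ) :
    Overpartition n ≃ (Σ p : n.Partition, {s : Finset ℕ // s ⊆ p.parts.toFinset}) where
  toFun o := ⟨o.partition, o.overlined, o.overlined_subset⟩
  invFun x := ⟨x.1, x.2.1, x.2.2⟩
  left_inv _ := rfl
  right_inv _ := rfl

/-- Partial sums, over the size of the largest part, of the signed count of overpartitions of `n`:
those with largest part at most `N` are counted, with sign `(-1) ^ (number missing)`. -/
noncomputable def signedCount (N n : ℕ) : ℂ :=
  ∑ p : n.Partition, if p.parts.sup ≤ N then
    (-1) ^ partMissing p * 2 ^ p.parts.toFinset.card else 0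

lemma OMe_sub_OMo (n N : ℕ) (h : n ≤ N) : (OMe n : ℂ) - (OMo n : ℂ) = signedCount N n := by
  have h1 : (OMe n : ℂ) - (OMo n : ℂ) = ∑ o : Overpartition n, (-1 : ℂ) ^ missingCount o := by
    rw [OMe, OMo, Fintype.card_subtype, Fintype.card_subtype, Finset.card_filter,
      Finset.card_filter, Nat.cast_sum, Nat.cast_sum, ← Finset.sum_sub_distrib]
    refine Finset.sum_congr rfl fun o _ => ?_
    rcases Nat.even_or_odd (missingCount o) with ho | ho
    · simp [ho, Nat.not_odd_iff_even.mpr ho, ho.neg_one_pow]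
    · simp [ho, Nat.not_even_iff_odd.mpr ho, ho.neg_one_pow]
  rw [h1, signedCount, ← (overpartitionEquiv n).symm.sum_comp, Fintype.sum_sigma]
  refine Finset.sum_congr rfl fun p _ => ?_
  have hc : ∀ s : {s : Finset ℕ // s ⊆ p.parts.toFinset},
      missingCount ((overpartitionEquiv n).symm ⟨p, s⟩) = partMissing p := fun _ => rfl
  rw [if_pos ((sup_parts_le p).trans h)]
  simp only [hc, Finset.sum_const, Finset.card_univ, nsmul_eq_mul]
  rw [Fintype.card_of_subtype p.parts.toFinset.powerset (fun _ => Finset.mem_powerset),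
    Finset.card_powerset]
  push_cast
  ring

lemma signedCount_zero (n : ℕ) : signedCount 0 n = boundedCount (-2) 0 n := by
  refine Finset.sum_congr rfl fun p _ => ?_
  split_ifs with h
  · have := partMissing_add_card p
    have h1 : partMissing p = 0 := by omega
    have h2 : p.parts.toFinset.card = 0 := by omega
    simp [h1, h2]
  · rfl

/-- A partition with largest part `N` and `d` part sizes has `N - d` missing integers, so the sign
`(-1) ^ (N - d)` can be absorbed by changing the weight `2 ^ d` to `(-2) ^ d`. -/
lemma signedCount_succ (N n : ℕ) : signedCount (N + 1) n - signedCount N n =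
    (-1) ^ (N + 1) * (boundedCount (-2) (N + 1) n - boundedCount (-2) N n) := by
  simp only [signedCount, boundedCount]
  rw [← Finset.sum_sub_distrib, ← Finset.sum_sub_distrib, Finset.mul_sum]
  refine Finset.sum_congr rfl fun p _ => ?_
  rcases lt_trichotomy p.parts.sup (N + 1) with h | h | h
  · simp [show p.parts.sup ≤ N by omega, show p.parts.sup ≤ N + 1 by omega]
  · have := partMissing_add_card p
    rw [if_pos h.le, if_neg (by omega), if_pos h.le, if_neg (by omega), ← h, ← this, pow_add,
      sub_zero, sub_zero, mul_assoc, ← mul_pow]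
    norm_num
  · simp [show ¬ p.parts.sup ≤ N by omega, show ¬ p.parts.sup ≤ N + 1 by omega]

lemma norm_signedCount_le (N n : ℕ) : ‖signedCount N n‖ ≤ boundedCount (2 : ℝ) n n := by
  refine norm_sum_le_of_le _ fun p _ => ?_
  rw [if_pos (sup_parts_le p)]
  split_ifs <;> simp

lemma boundedCount_eq_of_le (n N : ℕ) (h : n ≤ N) :
    boundedCount (2 : ℝ) n n = boundedCount 2 N n := by
  refine Finset.sum_congr rfl fun p _ => ?_
  rw [if_pos (sup_parts_le p), if_pos ((sup_parts_le p).trans h)]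

lemma boundedCount_nonneg (N n : ℕ) : 0 ≤ boundedCount (2 : ℝ) N n :=
  Finset.sum_nonneg fun p _ => by split_ifs <;> positivity

/-- The generating function of all overpartitions converges: its partial sums are bounded by the
products `∏ (1 + r ^ i) / (1 - r ^ i)`, hence by `exp (2 ∑ r ^ i / (1 - r))`. -/
lemma summable_overpartitions {r : ℝ} (h0 : 0 ≤ r) (h1 : r < 1) :
    Summable fun n => boundedCount (2 : ℝ) n n * r ^ n := by
  apply summable_of_sum_range_le (c := Real.exp (2 / (1 - r) * (1 - r)⁻¹))
    (fun n => mul_nonneg (boundedCount_nonneg _ _) (by positivity))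
  intro N
  have hr : ‖r‖ < 1 := by rwa [Real.norm_of_nonneg h0]
  have hN := evaluates_bounded (2 : ℝ) N hr
  have hle : ∑ n ∈ Finset.range N, boundedCount (2 : ℝ) n n * r ^ n ≤
      ∏ i ∈ Finset.range N, (1 + 2 * r ^ (i + 1) / (1 - r ^ (i + 1))) := by
    rw [Finset.sum_congr rfl (g := fun n => boundedCount 2 N n * r ^ n)]
    · exact sum_le_hasSum _ (fun n _ => mul_nonneg (boundedCount_nonneg _ _) (by positivity)) hN.2
    · intro n hn
      rw [boundedCount_eq_of_le n N (Finset.mem_range.mp hn).le]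
  refine hle.trans ?_
  have hterm : ∀ i ∈ Finset.range N, 1 + 2 * r ^ (i + 1) / (1 - r ^ (i + 1)) ≤
      Real.exp (2 / (1 - r) * r ^ i) := by
    intro i _
    have h2 : r ^ (i + 1) ≤ r := pow_le_of_le_one h0 h1.le (by simp)
    have h3 : r ^ (i + 1) ≤ r ^ i := pow_le_pow_of_le_one h0 h1.le (by simp)
    have h4 : 2 * r ^ (i + 1) / (1 - r ^ (i + 1)) ≤ 2 / (1 - r) * r ^ i := by
      rw [div_mul_eq_mul_div]
      apply div_le_div₀ <;> first | positivity | linarith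
    have := Real.add_one_le_exp (2 / (1 - r) * r ^ i)
    linarith
  have hnn : ∀ i ∈ Finset.range N, 0 ≤ 1 + 2 * r ^ (i + 1) / (1 - r ^ (i + 1)) := by
    intro i _
    have h2 : r ^ (i + 1) ≤ r := pow_le_of_le_one h0 h1.le (by simp)
    have : 0 ≤ 1 - r ^ (i + 1) := by linarith
    positivity
  refine (Finset.prod_le_prod hnn hterm).trans ?_
  rw [← Real.exp_sum, ← Finset.mul_sum]
  apply Real.exp_le_exp.mpr
  apply mul_le_mul_of_nonneg_left
  · exact sum_le_hasSum _ (fun i _ => by positivity) (hasSum_geometric_of_lt_one h0 h1)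
  · have : 0 < 1 - r := by linarith
    positivity

/-! ### The `q`-binomial theorem -/

section QBinomial

variable {q : ℂ}

lemma one_sub_pow_ne_zero (hq : ‖q‖ < 1) (n : ℕ) : 1 - q ^ (n + 1) ≠ 0 := by
  intro h
  have h1 : ‖q ^ (n + 1)‖ < 1 := by
    rw [norm_pow]; exact pow_lt_one₀ (norm_nonneg _) hq (by simp)
  rw [← sub_eq_zero.mp h, norm_one] at h1
  exact lt_irrefl _ h1

/-- The coefficient `(a; q)_n / (q; q)_n` of the `q`-binomial series. -/
noncomputable def qCoeff (a q : ℂ) (n : ℕ) : ℂ :=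
  ∏ j ∈ Finset.range n, (1 - a * q ^ j) / (1 - q ^ (j + 1))

/-- The `q`-binomial series `∑ (a; q)_n / (q; q)_n z ^ n`. -/
noncomputable def qSeries (a q z : ℂ) : ℂ := ∑' n, qCoeff a q n * z ^ n

lemma qCoeff_succ (a : ℂ) (n : ℕ) :
    qCoeff a q (n + 1) = qCoeff a q n * ((1 - a * q ^ n) / (1 - q ^ (n + 1))) :=
  Finset.prod_range_succ _ _

lemma summable_qSeries (a : ℂ) (hq : ‖q‖ < 1) {z : ℂ} (hz : ‖z‖ < 1) :
    Summable fun n => ‖qCoeff a q n * z ^ n‖ := by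
  obtain ⟨r, hzr, hr⟩ := exists_between hz
  refine summable_of_ratio_norm_eventually_le hr ?_
  have hp := tendsto_pow_atTop_nhds_zero_of_norm_lt_one hq
  have ht : Tendsto (fun n : ℕ => ‖(1 - a * q ^ n) / (1 - q ^ (n + 1)) * z‖) atTop (𝓝 ‖z‖) := by
    have := ((((hp.const_mul a).const_sub 1).div
      ((hp.comp (tendsto_add_atTop_nat 1)).const_sub 1) (by simp)).mul_const z).norm
    simpa using this
  filter_upwards [ht.eventually_lt_const hzr] with n hn
  rw [norm_norm, norm_norm, qCoeff_succ, pow_succ]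
  calc _ = ‖(1 - a * q ^ n) / (1 - q ^ (n + 1)) * z‖ * ‖qCoeff a q n * z ^ n‖ := by
        rw [← norm_mul]; congr 1; ring
    _ ≤ _ := mul_le_mul_of_nonneg_right hn.le (norm_nonneg _)

lemma norm_mul_pow_lt (hq : ‖q‖ < 1) {z : ℂ} (hz : ‖z‖ < 1) (k : ℕ) : ‖z * q ^ k‖ < 1 := by
  rw [norm_mul, norm_pow]
  exact (mul_le_of_le_one_right (norm_nonneg _)
    (pow_le_one₀ (norm_nonneg _) hq.le)).trans_lt hz

/-- The functional equation of the `q`-binomial series, from comparing coefficients. -/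
lemma qSeries_functional (a : ℂ) (hq : ‖q‖ < 1) {z : ℂ} (hz : ‖z‖ < 1) :
    (1 - z) * qSeries a q z = (1 - a * z) * qSeries a q (z * q) := by
  have hs := (summable_qSeries a hq hz).of_norm
  have hs' := (summable_qSeries a hq (by simpa using norm_mul_pow_lt hq hz 1) :
    Summable fun n => ‖qCoeff a q n * (z * q) ^ n‖).of_norm
  have h1 : qSeries a q z - qSeries a q (z * q) =
      z * qSeries a q z - a * z * qSeries a q (z * q) := by
    rw [qSeries, qSeries, ← hs.tsum_sub hs', (hs.sub hs').tsum_eq_zero_add, ← tsum_mul_left,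
      ← tsum_mul_left, ← (hs.mul_left z).tsum_sub (hs'.mul_left (a * z))]
    simp only [pow_zero, sub_self, zero_add]
    refine tsum_congr fun n => ?_
    have := one_sub_pow_ne_zero hq n
    rw [qCoeff_succ]
    field_simp
    ring
  linear_combination h1

lemma qSeries_iterate (a : ℂ) (hq : ‖q‖ < 1) {z : ℂ} (hz : ‖z‖ < 1) (K : ℕ) :
    (∏ k ∈ Finset.range K, (1 - z * q ^ k)) * qSeries a q z =
      (∏ k ∈ Finset.range K, (1 - a * (z * q ^ k))) * qSeries a q (z * q ^ K) := by
  induction K with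
  | zero => simp
  | succ K ih =>
    have := qSeries_functional a hq (norm_mul_pow_lt hq hz K)
    rw [Finset.prod_range_succ, Finset.prod_range_succ, pow_succ, ← mul_assoc z]
    linear_combination (1 - z * q ^ K) * ih +
      (∏ k ∈ Finset.range K, (1 - a * (z * q ^ k))) * this

/-- Continuity of the `q`-binomial series at `0`, along `z * q ^ K`. -/
lemma tendsto_qSeries (a : ℂ) (hq : ‖q‖ < 1) {z : ℂ} (hz : ‖z‖ < 1) :
    Tendsto (fun K : ℕ => qSeries a q (z * q ^ K)) atTop (𝓝 1) := by
  have h1 : ∑' n, qCoeff a q n * (0 : ℂ) ^ n = 1 := by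
    rw [tsum_eq_single 0]
    · simp [qCoeff]
    · intro n hn; simp [hn]
  rw [← h1]
  refine tendsto_tsum_of_dominated_convergence (summable_qSeries a hq hz) ?_ ?_
  · intro n
    have := (tendsto_pow_atTop_nhds_zero_of_norm_lt_one hq).const_mul z
    rw [mul_zero] at this
    exact (this.pow n).const_mul _
  · refine Eventually.of_forall fun K n => ?_
    rw [norm_mul, norm_mul, norm_pow, norm_pow]
    gcongr
    rw [norm_mul, norm_pow]
    exact mul_le_of_le_one_right (norm_nonneg _) (pow_le_one₀ (norm_nonneg _) hq.le)

lemma tendsto_prod_one_add (c : ℂ) (hq : ‖q‖ < 1) :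
    Tendsto (fun K => ∏ k ∈ Finset.range K, (1 + c * q ^ (k + 1))) atTop
      (𝓝 (∏' k : ℕ, (1 + c * q ^ (k + 1)))) := by
  refine (multipliable_one_add_of_summable ?_).hasProd.tendsto_prod_nat
  simp only [norm_mul, norm_pow, pow_succ, ← mul_assoc]
  exact ((summable_geometric_of_lt_one (norm_nonneg _) hq).mul_left _).mul_right _

/-- The `q`-binomial theorem with `a = 3`, `z = -q`. -/
lemma qSeries_eq (hq : ‖q‖ < 1) : qSeries 3 q (-q) =
    (∏' k : ℕ, (1 + 3 * q ^ (k + 1))) / ∏' k : ℕ, (1 + q ^ (k + 1)) := by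
  have hz : ‖-q‖ < 1 := by rwa [norm_neg]
  have hne : ∏' k : ℕ, (1 + q ^ (k + 1)) ≠ 0 := by
    refine tprod_one_add_ne_zero_of_summable (f := fun k => q ^ (k + 1)) ?_ ?_
    · intro k h
      have h1 : ‖q ^ (k + 1)‖ < 1 := by
        rw [norm_pow]; exact pow_lt_one₀ (norm_nonneg _) hq (by simp)
      rw [← neg_eq_of_add_eq_zero_right h, norm_neg, norm_one] at h1
      exact lt_irrefl _ h1
    · simp only [norm_mul, norm_pow, pow_succ]
      exact (summable_geometric_of_lt_one (norm_nonneg _) hq).mul_right _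
  rw [eq_div_iff hne]
  have hl := (tendsto_prod_one_add 1 hq).mul_const (qSeries 3 q (-q))
  have hr := (tendsto_prod_one_add 3 hq).mul (tendsto_qSeries 3 hq hz)
  have he : ∀ K, (∏ k ∈ Finset.range K, (1 + 1 * q ^ (k + 1))) * qSeries 3 q (-q) =
      (∏ k ∈ Finset.range K, (1 + 3 * q ^ (k + 1))) * qSeries 3 q (-q * q ^ K) := by
    intro K
    convert qSeries_iterate 3 hq hz K using 4 <;> ring
  simp only [he] at hl
  have := tendsto_nhds_unique hl hr
  simp only [one_mul, mul_one] at this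
  rw [mul_comm, this]

/-- `∏ (1 - 3 q ^ i) / (1 - q ^ i)` over `1 ≤ i ≤ N` is `(3; q)_{N + 1} / (q; q)_N` up to the
factor `1 - 3 = -2`. -/
lemma qCoeff_three_succ (hq : ‖q‖ < 1) (N : ℕ) : qCoeff 3 q (N + 1) =
    (∏ i ∈ Finset.range N, (1 + -2 * q ^ (i + 1) / (1 - q ^ (i + 1)))) *
      (-2 / (1 - q ^ (N + 1))) := by
  induction N with
  | zero => norm_num [qCoeff]
  | succ N ih =>
    have h1 := one_sub_pow_ne_zero hq N
    have h2 := one_sub_pow_ne_zero hq (N + 1)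
    have h3 : 1 + -2 * q ^ (N + 1) / (1 - q ^ (N + 1)) =
        (1 - 3 * q ^ (N + 1)) / (1 - q ^ (N + 1)) := by
      field_simp
      ring
    rw [qCoeff_succ, ih, Finset.prod_range_succ, h3]
    ring

/-- The signed generating function of the overpartitions with largest part at most `N` is a partial
sum of the `q`-binomial series. -/
lemma hasSum_signedCount (hq : ‖q‖ < 1) (N : ℕ) :
    HasSum (fun n => signedCount N n * q ^ n)
      (∑ k ∈ Finset.range (N + 1), qCoeff 3 q k * (-q) ^ k) := by
  induction N with
  | zero =>
    have := (evaluates_bounded (-2 : ℂ) 0 hq).2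
    simpa [signedCount_zero, qCoeff] using this
  | succ N ih =>
    have hd := ((evaluates_bounded (-2 : ℂ) (N + 1) hq).2.sub
      (evaluates_bounded (-2 : ℂ) N hq).2).mul_left ((-1) ^ (N + 1))
    have := ih.add hd
    rw [Finset.sum_range_succ]
    convert this using 1
    · funext n
      linear_combination q ^ n * signedCount_succ N n
    · rw [qCoeff_three_succ hq, Finset.prod_range_succ, neg_pow q]
      ring

end QBinomial

theorem statement14 (q : ℂ) (hq : ‖q‖ < 1) :
    ∑' n : ℕ, ((OMe n : ℂ) - (OMo n : ℂ)) * q ^ n =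
      (∏' k : ℕ, (1 + 3 * q ^ (k + 1))) / ∏' k : ℕ, (1 + q ^ (k + 1)) := by
  rw [← qSeries_eq hq]
  have h1 : Tendsto (fun N => ∑' n, signedCount N n * q ^ n) atTop
      (𝓝 (∑' n : ℕ, ((OMe n : ℂ) - (OMo n : ℂ)) * q ^ n)) := by
    refine tendsto_tsum_of_dominated_convergence
      (summable_overpartitions (norm_nonneg q) hq) ?_ ?_
    · intro n
      refine tendsto_const_nhds.congr' ?_
      filter_upwards [eventually_ge_atTop n] with N hN
      rw [OMe_sub_OMo n N hN]
    · refine Eventually.of_forall fun N n => ?_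
      rw [norm_mul, norm_pow]
      exact mul_le_mul_of_nonneg_right (norm_signedCount_le N n) (by positivity)
  simp only [(hasSum_signedCount hq _).tsum_eq] at h1
  have hz : ‖-q‖ < 1 := by rwa [norm_neg]
  have h2 := (summable_qSeries 3 hq hz).of_norm.hasSum.tendsto_sum_nat
  exact tendsto_nhds_unique h1 (h2.comp (tendsto_add_atTop_nat 1))
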